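/- arXiv:2308.14351 — 2 statements merged into one kernel-verified Lean document; each statement's English description precedes it below -/
import Mathlib

section
/- Let R be a nontrivial commutative ring that is locally residually-ℤ and let G be a subgroup of UT₃(R) containing a₁ and a₂. Then the representation G ≤ UT₃(R) satisfies the Lame Property if and only if both of the following hold: (1) for every y ∈ C_G(a₂) ∖ Z(G), the entry y₁₂ is not a zero divisor in R; (2) for every x ∈ C_G(a₁) ∖ Z(G), the entry x₂₃ is not a zero divisor in R. -/
set_option linter.unnecessarySeqFocus false

open Matrix

/-- A 3×3 matrix is *upper unitriangular* if all diagonal entries are `1`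
and all entries below the diagonal are `0`. -/
def IsUnitriangular {R : Type*} [CommRing R] (M : Matrix (Fin 3) (Fin 3) R) : Prop :=
  (∀ i, M i i = 1) ∧ ∀ i j : Fin 3, j < i → M i j = 0

/-- The upper unitriangular matrix with above-diagonal entries `a b c`, as a unit. -/
def ut {R : Type*} [CommRing R] (a b c : R) : (Matrix (Fin 3) (Fin 3) R)ˣ where
  val := !![1, a, b; 0, 1, c; 0, 0, 1]
  inv := !![1, -a, a * c - b; 0, 1, -c; 0, 0, 1]
  val_inv := by
    ext i j
    fin_cases i <;> fin_cases j <;>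
      simp [Matrix.mul_apply, Fin.sum_univ_three, Matrix.one_apply, Matrix.vecHead, Matrix.vecTail] <;> ring
  inv_val := by
    ext i j
    fin_cases i <;> fin_cases j <;>
      simp [Matrix.mul_apply, Fin.sum_univ_three, Matrix.one_apply, Matrix.vecHead, Matrix.vecTail] <;> ring

lemma ut_eq_iff {R : Type*} [CommRing R] (g : (Matrix (Fin 3) (Fin 3) R)ˣ) :
    IsUnitriangular (g : Matrix (Fin 3) (Fin 3) R) ↔
      ∃ a b c : R, g = ut a b c := by
  constructor
  · rintro ⟨h1, h2⟩
    refine ⟨(g : Matrix (Fin 3) (Fin 3) R) 0 1, (g : Matrix (Fin 3) (Fin 3) R) 0 2,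
      (g : Matrix (Fin 3) (Fin 3) R) 1 2, Units.ext ?_⟩
    ext i j
    fin_cases i <;> fin_cases j <;>
      simp [ut, Matrix.vecHead, Matrix.vecTail, h1, h2 1 0 (by decide), h2 2 0 (by decide), h2 2 1 (by decide)]
  · rintro ⟨a, b, c, rfl⟩
    constructor
    · intro i; fin_cases i <;> simp [ut]
    · intro i j hij
      fin_cases i <;> fin_cases j <;> simp_all [ut, Matrix.vecHead, Matrix.vecTail]

/-- `UT₃(R)`: the group of 3×3 upper unitriangular matrices over `R`, realized as the
subgroup of units of the matrix ring whose underlying matrices are upper unitriangular. -/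
def UT3 (R : Type*) [CommRing R] : Subgroup (Matrix (Fin 3) (Fin 3) R)ˣ where
  carrier := {g | IsUnitriangular (g : Matrix (Fin 3) (Fin 3) R)}
  one_mem' := by
    constructor
    · intro i; simp
    · intro i j hij; simp [Matrix.one_apply, hij.ne']
  mul_mem' := by
    intro a b ha hb
    rw [Set.mem_setOf_eq, ut_eq_iff] at *
    obtain ⟨a1, a2, a3, rfl⟩ := ha
    obtain ⟨b1, b2, b3, rfl⟩ := hb
    refine ⟨a1 + b1, a2 + b2 + a1 * b3, a3 + b3, Units.ext ?_⟩
    ext i j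
    fin_cases i <;> fin_cases j <;>
      simp [ut, Matrix.mul_apply, Fin.sum_univ_three, Matrix.vecHead, Matrix.vecTail] <;> ring
  inv_mem' := by
    intro a ha
    rw [Set.mem_setOf_eq, ut_eq_iff] at *
    obtain ⟨a1, a2, a3, rfl⟩ := ha
    refine ⟨-a1, a1 * a3 - a2, -a3, Units.ext ?_⟩
    rfl

/-- The generator `a₁` of the Heisenberg group: `(2,3)`-entry `1`, other
above-diagonal entries `0`. -/
def genA1 (R : Type*) [CommRing R] : (Matrix (Fin 3) (Fin 3) R)ˣ := ut 0 0 1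

/-- The generator `a₂` of the Heisenberg group: `(1,2)`-entry `1`, other
above-diagonal entries `0`. -/
def genA2 (R : Type*) [CommRing R] : (Matrix (Fin 3) (Fin 3) R)ˣ := ut 1 0 0

lemma genA1_mem (R : Type*) [CommRing R] : genA1 R ∈ UT3 R :=
  (ut_eq_iff _).mpr ⟨0, 0, 1, rfl⟩

lemma genA2_mem (R : Type*) [CommRing R] : genA2 R ∈ UT3 R :=
  (ut_eq_iff _).mpr ⟨1, 0, 0, rfl⟩

/-- A commutative ring `R` is *locally residually-ℤ* if for every finitely generated
subring `R₀` of `R` and every nonzero `r ∈ R₀` there is a ring homomorphism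
`φ : R₀ →+* ℤ` with `φ r ≠ 0`. -/
def LocResZ (R : Type*) [CommRing R] : Prop :=
  ∀ R₀ : Subring R, (∃ s : Finset R, R₀ = Subring.closure ↑s) →
    ∀ r : R₀, r ≠ 0 → ∃ φ : R₀ →+* ℤ, φ r ≠ 0

/-- The representation `G ≤ UT₃(R)` satisfies the *Lame Property* if for every
`g ∈ C_G(a₁) ∪ C_G(a₂)`, either `g₁₂² + g₂₃² = 0` or `g₁₂² + g₂₃²` is not a zero
divisor in `R`. -/
def LameProperty (R : Type*) [CommRing R] (G : Subgroup (Matrix (Fin 3) (Fin 3) R)ˣ) : Prop :=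
  ∀ g ∈ G, (g * genA1 R = genA1 R * g ∨ g * genA2 R = genA2 R * g) →
    ((g : Matrix (Fin 3) (Fin 3) R) 0 1 ^ 2 + (g : Matrix (Fin 3) (Fin 3) R) 1 2 ^ 2 = 0 ∨
      (g : Matrix (Fin 3) (Fin 3) R) 0 1 ^ 2 + (g : Matrix (Fin 3) (Fin 3) R) 1 2 ^ 2 ∈
        nonZeroDivisors R)

lemma ut_comm_iff {R : Type*} [CommRing R] (a b c a' b' c' : R) :
    ut a b c * ut a' b' c' = ut a' b' c' * ut a b c ↔ a * c' = a' * c := by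
  have key : ∀ x y z x' y' z' : R,
      ut x y z * ut x' y' z' = ut (x + x') (y + y' + x * z') (z + z') := by
    intro x y z x' y' z'
    apply Units.ext
    ext i j
    fin_cases i <;> fin_cases j <;>
      simp [ut, Matrix.mul_apply, Fin.sum_univ_three, Matrix.vecHead, Matrix.vecTail] <;> ring
  rw [key, key]
  constructor
  · intro h
    have h' := congrArg (fun u : (Matrix (Fin 3) (Fin 3) R)ˣ =>
      (u : Matrix (Fin 3) (Fin 3) R) 0 2) h
    simp [ut] at h'
    linear_combination h'
  · intro h
    rw [h, add_comm a, add_comm b, add_comm c]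

lemma sq_zero_of_locResZ {R : Type*} [CommRing R] (hR : LocResZ R) (r : R) (h : r ^ 2 = 0) :
    r = 0 := by
  by_contra hne
  have hm : r ∈ Subring.closure (({r} : Finset R) : Set R) :=
    Subring.subset_closure (by simp)
  obtain ⟨φ, hφ⟩ := hR _ ⟨{r}, rfl⟩ ⟨r, hm⟩ (fun h0 => hne (congrArg Subtype.val h0))
  apply hφ
  have : (⟨r, hm⟩ : Subring.closure (({r} : Finset R) : Set R)) ^ 2 = 0 := Subtype.ext h
  have h2 := congrArg φ this
  rw [map_pow, map_zero] at h2
  exact pow_eq_zero_iff (two_ne_zero) |>.mp h2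

lemma ut_01 {R : Type*} [CommRing R] (a b c : R) :
    ((ut a b c : (Matrix (Fin 3) (Fin 3) R)ˣ) : Matrix (Fin 3) (Fin 3) R) 0 1 = a := by
  simp [ut]

lemma ut_12 {R : Type*} [CommRing R] (a b c : R) :
    ((ut a b c : (Matrix (Fin 3) (Fin 3) R)ˣ) : Matrix (Fin 3) (Fin 3) R) 1 2 = c := by
  simp [ut]

lemma nzd_of_sq {R : Type*} [CommRing R] (a : R) (h : a ^ 2 ∈ nonZeroDivisors R) :
    a ∈ nonZeroDivisors R := by
  rw [pow_two] at h
  exact (mul_mem_nonZeroDivisors.mp h).1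

/-- For a nontrivial locally residually-ℤ commutative ring `R` and a
subgroup `G ≤ UT₃(R)` containing `a₁, a₂`, the representation satisfies the Lame Property
iff (1) for every `y ∈ C_G(a₂) ∖ Z(G)` the entry `y₁₂` is not a zero divisor, and
(2) for every `x ∈ C_G(a₁) ∖ Z(G)` the entry `x₂₃` is not a zero divisor. -/
theorem lame_iff (R : Type*) [CommRing R] [Nontrivial R] (hR : LocResZ R)
    (G : Subgroup (Matrix (Fin 3) (Fin 3) R)ˣ) (hG : G ≤ UT3 R)
    (h1 : genA1 R ∈ G) (h2 : genA2 R ∈ G) :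
    LameProperty R G ↔
      ((∀ y ∈ G, y * genA2 R = genA2 R * y → ¬(∀ g ∈ G, y * g = g * y) →
          (y : Matrix (Fin 3) (Fin 3) R) 0 1 ∈ nonZeroDivisors R) ∧
       (∀ x ∈ G, x * genA1 R = genA1 R * x → ¬(∀ g ∈ G, x * g = g * x) →
          (x : Matrix (Fin 3) (Fin 3) R) 1 2 ∈ nonZeroDivisors R)) := by
  have central : ∀ b : R, ∀ g ∈ G, ut 0 b 0 * g = g * ut 0 b 0 := by
    intro b g hg
    obtain ⟨a', b', c', rfl⟩ := (ut_eq_iff g).mp (hG hg)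
    rw [ut_comm_iff]; ring
  constructor
  · intro hL
    constructor
    · intro y hy hc hn
      have hl := hL y hy (Or.inr hc)
      obtain ⟨a, b, c, rfl⟩ := (ut_eq_iff y).mp (hG hy)
      rw [genA2, ut_comm_iff] at hc
      obtain rfl : c = 0 := by linear_combination -hc
      rw [ut_01, ut_12, zero_pow two_ne_zero, add_zero] at hl
      rw [ut_01]
      rcases hl with hl | hl
      · obtain rfl := sq_zero_of_locResZ hR a hl
        exact absurd (central b) hn
      · exact nzd_of_sq a hl
    · intro y hy hc hn
      have hl := hL y hy (Or.inl hc)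
      obtain ⟨a, b, c, rfl⟩ := (ut_eq_iff y).mp (hG hy)
      rw [genA1, ut_comm_iff] at hc
      obtain rfl : a = 0 := by linear_combination hc
      rw [ut_01, ut_12, zero_pow two_ne_zero, zero_add] at hl
      rw [ut_12]
      rcases hl with hl | hl
      · obtain rfl := sq_zero_of_locResZ hR c hl
        exact absurd (central b) hn
      · exact nzd_of_sq c hl
  · rintro ⟨H2, H1⟩ g hg hc
    by_cases hz : ∀ k ∈ G, g * k = k * g
    · left
      have e1 := hz _ h1
      have e2 := hz _ h2
      obtain ⟨a, b, c, rfl⟩ := (ut_eq_iff g).mp (hG hg)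
      rw [genA1, ut_comm_iff] at e1
      rw [genA2, ut_comm_iff] at e2
      rw [ut_01, ut_12]
      linear_combination a * e1 - c * e2
    · right
      rcases hc with hc | hc
      · have hn := H1 g hg hc hz
        obtain ⟨a, b, c, rfl⟩ := (ut_eq_iff g).mp (hG hg)
        rw [genA1, ut_comm_iff] at hc
        obtain rfl : a = 0 := by linear_combination hc
        rw [ut_12] at hn
        rw [ut_01, ut_12, zero_pow two_ne_zero, zero_add]
        exact pow_mem hn 2
      · have hn := H2 g hg hc hz
        obtain ⟨a, b, c, rfl⟩ := (ut_eq_iff g).mp (hG hg)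
        rw [genA2, ut_comm_iff] at hc
        obtain rfl : c = 0 := by linear_combination -hc
        rw [ut_01] at hn
        rw [ut_01, ut_12, zero_pow two_ne_zero, add_zero]
        exact pow_mem hn 2
end

section
/- Let D be a commutative integral domain every finitely generated subring of which is residually-ℤ, and let G be a finitely generated subgroup of UT₃(D) containing a₁ and a₂. Then G is discriminated into the Heisenberg group: for every finite list g₁, …, g_k of nonidentity elements of G there is a group homomorphism φ: G → UT₃(ℤ) with φ(a₁) = a₁, φ(a₂) = a₂, and φ(gᵢ) ≠ 1 for all i. -/
set_option linter.unnecessarySeqFocus false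

open Matrix

lemma ut_mul_ut {R : Type*} [CommRing R] (a b c a' b' c' : R) :
    ut a b c * ut a' b' c' = ut (a + a') (b + b' + a * c') (c + c') := by
  refine Units.ext ?_
  ext i j
  fin_cases i <;> fin_cases j <;>
    simp [ut, Matrix.mul_apply, Fin.sum_univ_three, Matrix.vecHead, Matrix.vecTail] <;> ring

lemma ut_inv_eq {R : Type*} [CommRing R] (a b c : R) :
    (ut a b c)⁻¹ = ut (-a) (a * c - b) (-c) := Units.ext rfl

lemma ut_zero_eq_one {R : Type*} [CommRing R] : ut (0 : R) 0 0 = 1 := by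
  refine Units.ext ?_
  ext i j
  fin_cases i <;> fin_cases j <;> simp [ut, Matrix.vecHead, Matrix.vecTail]

lemma ut_inj {R : Type*} [CommRing R] {a b c a' b' c' : R} (h : ut a b c = ut a' b' c') :
    a = a' ∧ b = b' ∧ c = c' := by
  have h' := congrArg (fun g : (Matrix (Fin 3) (Fin 3) R)ˣ => (g : Matrix (Fin 3) (Fin 3) R)) h
  refine ⟨?_, ?_, ?_⟩
  · simpa [ut] using congrFun (congrFun h' 0) 1
  · simpa [ut] using congrFun (congrFun h' 0) 2
  · simpa [ut] using congrFun (congrFun h' 1) 2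

/-- A finitely generated subgroup `G ≤ UT₃(D)` containing `a₁, a₂`,
where `D` is an integral domain all of whose finitely generated subrings are
residually-ℤ, is discriminated into the Heisenberg group `UT₃(ℤ)` by homomorphisms
fixing `a₁` and `a₂`. -/
theorem discriminated_into_heisenberg (D : Type*) [CommRing D] [IsDomain D]
    (hD : LocResZ D)
    (G : Subgroup (Matrix (Fin 3) (Fin 3) D)ˣ) (hfg : G.FG) (hG : G ≤ UT3 D)
    (h1 : genA1 D ∈ G) (h2 : genA2 D ∈ G) :
    ∀ l : List G, (∀ g ∈ l, g ≠ 1) →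
      ∃ φ : G →* (UT3 ℤ),
        φ ⟨genA1 D, h1⟩ = ⟨genA1 ℤ, genA1_mem ℤ⟩ ∧
        φ ⟨genA2 D, h2⟩ = ⟨genA2 ℤ, genA2_mem ℤ⟩ ∧
        ∀ g ∈ l, φ g ≠ 1 := by
  classical
  intro l hl
  obtain ⟨S, hS⟩ := hfg
  -- the subring generated by the entries of the generators
  let ent : Fin 3 → Fin 3 → (Matrix (Fin 3) (Fin 3) D)ˣ → D :=
    fun i j g => (g : Matrix (Fin 3) (Fin 3) D) i j
  let T : Finset D := S.image (ent 0 1) ∪ S.image (ent 0 2) ∪ S.image (ent 1 2)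
  let R₀ : Subring D := Subring.closure (T : Set D)
  have key : ∀ g ∈ G, ∃ a b c : R₀, g = ut (a : D) b c := by
    intro g hg
    rw [← hS] at hg
    induction hg using Subgroup.closure_induction with
    | mem x hx =>
      have hxG : x ∈ G := hS ▸ Subgroup.subset_closure hx
      obtain ⟨a, b, c, rfl⟩ := (ut_eq_iff x).mp (hG hxG)
      refine ⟨⟨a, Subring.subset_closure ?_⟩, ⟨b, Subring.subset_closure ?_⟩,
        ⟨c, Subring.subset_closure ?_⟩, rfl⟩
      · simp only [T, Finset.coe_union, Finset.coe_image]
        exact Or.inl (Or.inl ⟨_, hx, by simp [ent, ut]⟩)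
      · simp only [T, Finset.coe_union, Finset.coe_image]
        exact Or.inl (Or.inr ⟨_, hx, by simp [ent, ut]⟩)
      · simp only [T, Finset.coe_union, Finset.coe_image]
        exact Or.inr ⟨_, hx, by simp [ent, ut]⟩
    | one => exact ⟨0, 0, 0, by simp [ut_zero_eq_one]⟩
    | mul x y _ _ hx hy =>
      obtain ⟨a, b, c, rfl⟩ := hx
      obtain ⟨a', b', c', rfl⟩ := hy
      exact ⟨a + a', b + b' + a * c', c + c', by simp [ut_mul_ut]⟩
    | inv x _ hx =>
      obtain ⟨a, b, c, rfl⟩ := hx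
      exact ⟨-a, a * c - b, -c, by simp [ut_inv_eq]⟩
  choose! A B C hABC using fun g : G => key g.1 g.2
  have uniq : ∀ (g : G) (a b c : R₀), g.1 = ut (a : D) b c → A g = a ∧ B g = b ∧ C g = c := by
    intro g a b c h
    obtain ⟨p, q, r⟩ := ut_inj ((hABC g).symm.trans h)
    exact ⟨Subtype.ext p, Subtype.ext q, Subtype.ext r⟩
  have hw : ∀ g : G, ∃ w : R₀, g ≠ 1 → w ≠ 0 ∧ (w = A g ∨ w = B g ∨ w = C g) := by
    intro g
    by_cases ha : A g = 0
    · by_cases hb : B g = 0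
      · refine ⟨C g, fun hg => ⟨fun hc => hg (Subtype.ext ?_), by simp⟩⟩
        rw [hABC g, ha, hb, hc]
        simp [ut_zero_eq_one]
      · exact ⟨B g, fun _ => ⟨hb, by simp⟩⟩
    · exact ⟨A g, fun _ => ⟨ha, by simp⟩⟩
  choose w hw using hw
  have hprod : (l.map w).prod ≠ 0 := by
    intro h
    obtain ⟨g, hg, hg0⟩ := List.mem_map.mp (List.prod_eq_zero_iff.mp h)
    exact (hw g (hl g hg)).1 hg0
  obtain ⟨f, hf⟩ := hD R₀ ⟨T, rfl⟩ _ hprod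
  have hfw : ∀ g ∈ l, f (w g) ≠ 0 := by
    intro g hg h
    apply hf
    rw [map_list_prod]
    exact List.prod_eq_zero_iff.mpr (by
      rw [List.map_map]
      exact List.mem_map.mpr ⟨g, hg, h⟩)
  let φ : G →* UT3 ℤ := MonoidHom.mk'
    (fun g => ⟨ut (f (A g)) (f (B g)) (f (C g)), (ut_eq_iff _).mpr ⟨_, _, _, rfl⟩⟩) (by
      intro g g'
      obtain ⟨p, q, r⟩ := uniq (g * g') (A g + A g') (B g + B g' + A g * C g') (C g + C g') (by
        rw [Subgroup.coe_mul, hABC g, hABC g', ut_mul_ut]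
        simp)
      apply Subtype.ext
      simp only [Subgroup.coe_mul, ut_mul_ut, p, q, r, map_add, map_mul])
  have hφ : ∀ g, (φ g).1 = ut (f (A g)) (f (B g)) (f (C g)) := fun g => rfl
  refine ⟨φ, ?_, ?_, ?_⟩
  · apply Subtype.ext
    obtain ⟨p, q, r⟩ := uniq ⟨genA1 D, h1⟩ 0 0 1 (by simp [genA1])
    rw [hφ, p, q, r]
    simp [genA1]
  · apply Subtype.ext
    obtain ⟨p, q, r⟩ := uniq ⟨genA2 D, h2⟩ 1 0 0 (by simp [genA2])
    rw [hφ, p, q, r]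
    simp [genA2]
  · intro g hg h
    have h' : ut (f (A g)) (f (B g)) (f (C g)) = ut 0 0 0 := by
      rw [← hφ, h, ut_zero_eq_one]
      rfl
    obtain ⟨p, q, r⟩ := ut_inj h'
    apply hfw g hg
    rcases (hw g (hl g hg)).2 with e | e | e <;> rw [e] <;> assumption
end
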